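/- Let φ be a nondecreasing real function such that all the expectations below exist and are finite. Then |(1/(2λ)) E[ D ∫_{−Δ}^{0} (φ(W + u) − φ(W)) du ]| ≤ (1/(2λ)) E[ D* Δ φ(W) ]. -/

import Mathlib

open MeasureTheory ProbabilityTheory

/-!
Write `J a b = ∫ u in -(a - b)..0, (ψ (a + u) - ψ a)` for the inner integral at `W = a`, `W' = b`.
Monotonicity of `ψ` gives `-(a - b) * (ψ a - ψ b) ≤ J a b ≤ 0`, whatever the order of `a` and `b`
(`monotoneIncrement_mem_Icc`). The bounds are symmetric in `a` and `b`, so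
`|J a b - J b a| ≤ (a - b) * (ψ a - ψ b)`. Since `D` changes sign when `X` and `X'` are swapped,
exchangeability turns `E[D * J W W']` into `(1 / 2) * E[D * (J W W' - J W' W)]`, which is at most
`(1 / 2) * E[Ds * Δ * (ψ W - ψ W')]` in absolute value. A second swap shows that the last
expectation is `2 * E[Ds * Δ * ψ W]`. Bounding `J W W'` without antisymmetrizing first would
lose a factor `2`.
-/

/-- The integral of the increment of `ψ` at `a` over the displacements `u` from `b - a` to `0`
(an oriented integral, so `b` may lie on either side of `a`). -/
noncomputable def monotoneIncrement (ψ : ℝ → ℝ) (a b : ℝ) : ℝ :=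
  ∫ u in (-(a - b))..(0 : ℝ), (ψ (a + u) - ψ a)

lemma monotoneIncrement_eq {ψ : ℝ → ℝ} (hψ : Monotone ψ) (a b : ℝ) :
    monotoneIncrement ψ a b = (∫ v in b..a, ψ v) - (a - b) * ψ a := by
  have h1 : monotoneIncrement ψ a b = ∫ v in b..a, (ψ v - ψ a) := by
    have h := intervalIntegral.integral_comp_add_left (a := -(a - b)) (b := 0)
      (fun v => ψ v - ψ a) a
    have e : a + -(a - b) = b := by ring
    rw [e, add_zero] at h
    exact h
  rw [h1, intervalIntegral.integral_sub hψ.intervalIntegrable intervalIntegrable_const,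
    intervalIntegral.integral_const, smul_eq_mul]

lemma measurable_monotoneIncrement {ψ : ℝ → ℝ} (hψ : Monotone ψ) :
    Measurable fun p : ℝ × ℝ => monotoneIncrement ψ p.1 p.2 := by
  have hP : Measurable fun t : ℝ => ∫ v in (0 : ℝ)..t, ψ v :=
    (intervalIntegral.continuous_primitive (fun _ _ => hψ.intervalIntegrable) 0).measurable
  have h : (fun p : ℝ × ℝ => monotoneIncrement ψ p.1 p.2) = fun p =>
      ((∫ v in (0 : ℝ)..p.1, ψ v) - ∫ v in (0 : ℝ)..p.2, ψ v) - (p.1 - p.2) * ψ p.1 := by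
    funext p
    rw [monotoneIncrement_eq hψ, intervalIntegral.integral_interval_sub_left
      hψ.intervalIntegrable hψ.intervalIntegrable]
  rw [h]
  exact ((hP.comp measurable_fst).sub (hP.comp measurable_snd)).sub
    ((measurable_fst.sub measurable_snd).mul (hψ.measurable.comp measurable_fst))

lemma integral_mem_Icc_of_monotone {ψ : ℝ → ℝ} (hψ : Monotone ψ) {a b : ℝ} (hab : a ≤ b) :
    ∫ v in a..b, ψ v ∈ Set.Icc ((b - a) * ψ a) ((b - a) * ψ b) := by
  have h1 := intervalIntegral.integral_mono_on (μ := volume) hab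
    (intervalIntegrable_const (c := ψ a)) hψ.intervalIntegrable (fun x hx => hψ hx.1)
  have h2 := intervalIntegral.integral_mono_on (μ := volume) hab
    hψ.intervalIntegrable (intervalIntegrable_const (c := ψ b)) (fun x hx => hψ hx.2)
  rw [intervalIntegral.integral_const, smul_eq_mul] at h1 h2
  exact ⟨h1, h2⟩

lemma monotoneIncrement_mem_Icc {ψ : ℝ → ℝ} (hψ : Monotone ψ) (a b : ℝ) :
    monotoneIncrement ψ a b ∈ Set.Icc (-((a - b) * (ψ a - ψ b))) 0 := by
  rw [monotoneIncrement_eq hψ]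
  rcases le_total b a with h | h
  · obtain ⟨h1, h2⟩ := integral_mem_Icc_of_monotone hψ h
    constructor <;> linarith
  · obtain ⟨h1, h2⟩ := integral_mem_Icc_of_monotone hψ h
    rw [intervalIntegral.integral_symm]
    constructor <;> linarith

lemma abs_monotoneIncrement_sub_le {ψ : ℝ → ℝ} (hψ : Monotone ψ) (a b : ℝ) :
    |monotoneIncrement ψ a b - monotoneIncrement ψ b a| ≤ (a - b) * (ψ a - ψ b) := by
  obtain ⟨h1, h2⟩ := monotoneIncrement_mem_Icc hψ a b
  obtain ⟨h3, h4⟩ := monotoneIncrement_mem_Icc hψ b a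
  rw [abs_le]
  constructor <;> linarith

/-- Lemma 4.1: for a nondecreasing function `ψ`,
`|(1/(2λ)) E[ D ∫_{−Δ}^{0} (ψ(W + u) − ψ(W)) du ]| ≤ (1/(2λ)) E[ D* Δ ψ(W) ]`. -/
theorem exchangeable_pair_monotone_integral_bound
    {Ω 𝓧 : Type*} [MeasurableSpace Ω] [MeasurableSpace 𝓧]
    (μ : Measure Ω) [IsProbabilityMeasure μ]
    (X X' : Ω → 𝓧) (hX : Measurable X) (hX' : Measurable X')
    (hexch : IdentDistrib (fun ω => (X ω, X' ω)) (fun ω => (X' ω, X ω)) μ μ)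
    (φ : 𝓧 → ℝ) (hφ : Measurable φ)
    (F : 𝓧 → 𝓧 → ℝ) (hFmeas : Measurable fun p : 𝓧 × 𝓧 => F p.1 p.2)
    (hFanti : ∀ x y, F x y = - F y x)
    (lam : ℝ) (hlam : lam ∈ Set.Ioo (0 : ℝ) 1)
    (R : Ω → ℝ) (hR : Integrable R μ)
    (W W' Δ D : Ω → ℝ)
    (hW : W = fun ω => φ (X ω)) (hW' : W' = fun ω => φ (X' ω))
    (hΔ : Δ = W - W') (hD : D = fun ω => F (X ω) (X' ω))
    (hD1 : μ[D | MeasurableSpace.comap X inferInstance]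
      =ᵐ[μ] fun ω => lam * (W ω + R ω))
    (Fs : 𝓧 → 𝓧 → ℝ) (hFs_meas : Measurable fun p : 𝓧 × 𝓧 => Fs p.1 p.2)
    (hFs_symm : ∀ x y, Fs x y = Fs y x)
    (Ds : Ω → ℝ) (hDs : Ds = fun ω => Fs (X ω) (X' ω))
    (hDsD : ∀ᵐ ω ∂μ, |D ω| ≤ Ds ω)
    -- the nondecreasing function
    (ψ : ℝ → ℝ) (hψ : Monotone ψ)
    -- all the expectations below exist and are finite
    (hint₁ : Integrable
      (fun ω => D ω * ∫ u in (-(Δ ω))..(0 : ℝ), (ψ (W ω + u) - ψ (W ω))) μ)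
    (hint₂ : Integrable (fun ω => Ds ω * Δ ω * ψ (W ω)) μ) :
    |(1 / (2 * lam)) *
        ∫ ω, D ω * (∫ u in (-(Δ ω))..(0 : ℝ), (ψ (W ω + u) - ψ (W ω))) ∂μ| ≤
      (1 / (2 * lam)) * ∫ ω, Ds ω * Δ ω * ψ (W ω) ∂μ := by
  subst hW hW' hΔ hD hDs
  have hpos : 0 < 1 / (2 * lam) := by have := hlam.1; positivity
  rw [abs_mul, abs_of_pos hpos]
  refine mul_le_mul_of_nonneg_left ?_ hpos.le
  let G : 𝓧 × 𝓧 → ℝ := fun p => F p.1 p.2 * monotoneIncrement ψ (φ p.1) (φ p.2)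
  let H : 𝓧 × 𝓧 → ℝ := fun p => Fs p.1 p.2 * (φ p.1 - φ p.2) * ψ (φ p.1)
  have hG : Measurable G := hFmeas.mul ((measurable_monotoneIncrement hψ).comp
    ((hφ.comp measurable_fst).prodMk (hφ.comp measurable_snd)))
  have hH : Measurable H :=
    (hFs_meas.mul ((hφ.comp measurable_fst).sub (hφ.comp measurable_snd))).mul
      (hψ.measurable.comp (hφ.comp measurable_fst))
  have iG : Integrable (fun ω => G (X ω, X' ω)) μ := hint₁
  have iH : Integrable (fun ω => H (X ω, X' ω)) μ := hint₂
  have iG' : Integrable (fun ω => G (X' ω, X ω)) μ := (hexch.comp hG).integrable_iff.1 iG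
  have iH' : Integrable (fun ω => H (X' ω, X ω)) μ := (hexch.comp hH).integrable_iff.1 iH
  have eG : ∫ ω, G (X ω, X' ω) ∂μ = ∫ ω, G (X' ω, X ω) ∂μ := (hexch.comp hG).integral_eq
  have eH : ∫ ω, H (X ω, X' ω) ∂μ = ∫ ω, H (X' ω, X ω) ∂μ := (hexch.comp hH).integral_eq
  change |∫ ω, G (X ω, X' ω) ∂μ| ≤ ∫ ω, H (X ω, X' ω) ∂μ
  have key : |∫ ω, (G (X ω, X' ω) + G (X' ω, X ω)) ∂μ| ≤
      ∫ ω, (H (X ω, X' ω) + H (X' ω, X ω)) ∂μ := by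
    rw [← Real.norm_eq_abs]
    refine norm_integral_le_of_norm_le (iH.add iH') ?_
    filter_upwards [hDsD] with ω hω
    -- Swapping the arguments flips the sign of `F`, and of the factor `Δ` next to `Fs`.
    have e1 : G (X ω, X' ω) + G (X' ω, X ω) = F (X ω) (X' ω) *
        (monotoneIncrement ψ (φ (X ω)) (φ (X' ω)) -
          monotoneIncrement ψ (φ (X' ω)) (φ (X ω))) := by
      simp only [G]
      rw [hFanti (X' ω) (X ω)]
      ring
    have e2 : H (X ω, X' ω) + H (X' ω, X ω) = Fs (X ω) (X' ω) *
        ((φ (X ω) - φ (X' ω)) * (ψ (φ (X ω)) - ψ (φ (X' ω)))) := by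
      simp only [H]
      rw [hFs_symm (X' ω) (X ω)]
      ring
    rw [e1, Real.norm_eq_abs, abs_mul]
    refine le_of_le_of_eq ?_ e2.symm
    exact mul_le_mul hω (abs_monotoneIncrement_sub_le hψ _ _) (abs_nonneg _)
      ((abs_nonneg _).trans hω)
  rw [integral_add iG iG', integral_add iH iH', ← eG, ← eH, ← two_mul, ← two_mul, abs_mul,
    abs_two] at key
  linarith
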